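/- arXiv:1801.10394 — 2 statements merged into one kernel-verified Lean document; each statement's English description precedes it below -/
import Mathlib

section
/- The bilinear form B of the geometric representation of a Coxeter system (W,S) is positive definite if and only if W is finite. -/
open Real

namespace CoxGeom

open Matrix CoxeterSystem

variable {n : ℕ}

/-- Basis vector. -/
noncomputable def e (i : Fin n) : Fin n → ℝ := Pi.single i 1

/-- The reflection attached to a simple generator. -/
noncomputable def refl (B : Matrix (Fin n) (Fin n) ℝ) (i : Fin n) : Module.End ℝ (Fin n → ℝ) :=
  LinearMap.id - ((2 : ℝ) • (LinearMap.proj i ∘ₗ B.mulVecLin)).smulRight (e i)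

lemma refl_apply (B : Matrix (Fin n) (Fin n) ℝ) (i : Fin n) (x : Fin n → ℝ) :
    refl B i x = x - (2 * (B *ᵥ x) i) • e i := by
  simp [refl]

lemma mulVec_e (B : Matrix (Fin n) (Fin n) ℝ) (i j : Fin n) : (B *ᵥ e j) i = B i j := by
  simp [e]

lemma refl_self (B : Matrix (Fin n) (Fin n) ℝ) (h1 : ∀ i, B i i = 1) (i : Fin n) :
    refl B i (e i) = - e i := by
  rw [refl_apply, mulVec_e, h1]; module

lemma refl_e (B : Matrix (Fin n) (Fin n) ℝ) (i j : Fin n) :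
    refl B i (e j) = e j - (2 * B i j) • e i := by
  rw [refl_apply, mulVec_e]

lemma refl_fix (B : Matrix (Fin n) (Fin n) ℝ) (i : Fin n) (x : Fin n → ℝ)
    (h : (B *ᵥ x) i = 0) : refl B i x = x := by
  rw [refl_apply, h]; simp

lemma pow_s (B : Matrix (Fin n) (Fin n) ℝ) (h1 : ∀ i, B i i = 1) (s t : Fin n) (θ : ℝ)
    (hst : B s t = - cos θ) (hts : B t s = - cos θ) (k : ℕ) :
    sin θ • ((refl B s * refl B t) ^ k) (e s) =
      sin (2 * k * θ + θ) • e s + sin (2 * k * θ) • e t := by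
  induction k with
  | zero => simp
  | succ k ih =>
    rw [pow_succ', Module.End.mul_apply, ← map_smul, ih]
    simp only [Module.End.mul_apply, map_add, map_smul, refl_e, map_sub, h1, hst, hts]
    have e1 : (2 * ((k + 1 : ℕ) : ℝ) * θ + θ) = 2 * k * θ + θ + θ + θ := by push_cast; ring
    have e2 : (2 * ((k + 1 : ℕ) : ℝ) * θ) = 2 * k * θ + θ + θ := by push_cast; ring
    rw [e1, e2]
    simp only [sin_add, cos_add]
    have hs := sin_sq_add_cos_sq θ
    match_scalars
    · generalize sin (2 * k * θ) = a at *
      generalize cos (2 * k * θ) = b at *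
      generalize sin θ = u at *
      generalize cos θ = v at *
      have : u ^ 2 = 1 - v ^ 2 := by linarith
      linear_combination (3 * a * v + b * u) * hs
    · generalize sin (2 * k * θ) = a at *
      generalize cos (2 * k * θ) = b at *
      generalize sin θ = u at *
      generalize cos θ = v at *
      linear_combination a * hs

lemma pow_t (B : Matrix (Fin n) (Fin n) ℝ) (h1 : ∀ i, B i i = 1) (s t : Fin n) (θ : ℝ)
    (hst : B s t = - cos θ) (hts : B t s = - cos θ) (k : ℕ) :
    sin θ • ((refl B s * refl B t) ^ k) (e t) =
      - (sin (2 * k * θ) • e s + sin (2 * k * θ - θ) • e t) := by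
  induction k with
  | zero => simp
  | succ k ih =>
    rw [pow_succ', Module.End.mul_apply, ← map_smul, ih]
    simp only [Module.End.mul_apply, map_add, map_neg, map_smul, refl_e, map_sub, h1, hst, hts]
    have e1 : (2 * ((k + 1 : ℕ) : ℝ) * θ - θ) = 2 * k * θ + θ := by push_cast; ring
    have e2 : (2 * ((k + 1 : ℕ) : ℝ) * θ) = 2 * k * θ + θ + θ := by push_cast; ring
    rw [e1, e2]
    simp only [sin_add, cos_add, sin_sub]
    have hs := sin_sq_add_cos_sq θ
    match_scalars
    · generalize sin (2 * k * θ) = a at *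
      generalize cos (2 * k * θ) = b at *
      generalize sin θ = u at *
      generalize cos θ = v at *
      linear_combination (-a) * hs
    · ring

lemma theta_facts (m : ℕ) (h0 : m ≠ 0) (h1 : m ≠ 1) : 0 < sin (π / m) := by
  have : (2 : ℝ) ≤ m := by exact_mod_cast (show 2 ≤ m by omega)
  apply sin_pos_of_pos_of_lt_pi
  · positivity
  · rw [div_lt_iff₀ (by positivity)]; nlinarith [pi_pos]

lemma pow_eq_one (B : Matrix (Fin n) (Fin n) ℝ) (h1 : ∀ i, B i i = 1) (s t : Fin n) (m : ℕ)
    (h0 : m ≠ 0) (hm1 : m ≠ 1)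
    (hst : B s t = - cos (π / m)) (hts : B t s = - cos (π / m)) :
    (refl B s * refl B t) ^ m = 1 := by
  have hpos := theta_facts m h0 hm1
  set θ := π / m with hθ
  have hmθ : 2 * m * θ = 2 * π := by rw [hθ]; field_simp
  have Ps : ((refl B s * refl B t) ^ m) (e s) = e s := by
    have := pow_s B h1 s t θ hst hts m
    rw [hmθ, sin_two_pi, add_comm (2 * π) θ, sin_add_two_pi, zero_smul, add_zero] at this
    exact smul_right_injective _ hpos.ne' this
  have Pt : ((refl B s * refl B t) ^ m) (e t) = e t := by
    have := pow_t B h1 s t θ hst hts m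
    rw [hmθ, sin_two_pi, sin_two_pi_sub, zero_smul, zero_add, neg_smul, neg_neg] at this
    exact smul_right_injective _ hpos.ne' this
  have Pz : ∀ z, (B *ᵥ z) s = 0 → (B *ᵥ z) t = 0 → ((refl B s * refl B t) ^ m) z = z := by
    intro z hs ht
    have : ∀ k : ℕ, ((refl B s * refl B t) ^ k) z = z := by
      intro k
      induction k with
      | zero => simp
      | succ k ih =>
        rw [pow_succ, Module.End.mul_apply, Module.End.mul_apply, refl_fix B t z ht,
          refl_fix B s z hs, ih]
    exact this m
  refine LinearMap.ext fun z => ?_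
  have hs := sin_sq_add_cos_sq θ
  obtain ⟨a, ha⟩ : ∃ a, a = ((B *ᵥ z) s + cos θ * (B *ᵥ z) t) / sin θ ^ 2 := ⟨_, rfl⟩
  obtain ⟨b, hb⟩ : ∃ b, b = ((B *ᵥ z) t + cos θ * (B *ᵥ z) s) / sin θ ^ 2 := ⟨_, rfl⟩
  rw [eq_div_iff (by positivity)] at ha hb
  have key : sin θ ^ 2 ≠ 0 := by positivity
  have hz := Pz (z - a • e s - b • e t) (by
      simp only [mulVec_sub, mulVec_smul, Pi.sub_apply, Pi.smul_apply, mulVec_e, h1, hst,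
        smul_eq_mul]
      apply mul_left_cancel₀ key
      linear_combination (-1) * ha + cos θ * hb + ((B *ᵥ z) s) * hs) (by
      simp only [mulVec_sub, mulVec_smul, Pi.sub_apply, Pi.smul_apply, mulVec_e, h1, hts,
        smul_eq_mul]
      apply mul_left_cancel₀ key
      linear_combination (-1) * hb + cos θ * ha + ((B *ᵥ z) t) * hs)
  simp only [map_sub, map_smul, Ps, Pt] at hz
  simpa using hz

/-- Coefficients of roots in the dihedral plane. -/
noncomputable def u (c : ℝ) : ℕ → ℝ
  | 0 => 0
  | 1 => 1
  | (k + 2) => 2 * c * u c (k + 1) - u c k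

lemma u_one (k : ℕ) : u 1 k = k ∧ u 1 (k + 1) = k + 1 := by
  induction k with
  | zero => simp [u]
  | succ k ih => 
    refine ⟨by push_cast; exact ih.2, ?_⟩
    rw [u, ih.1, ih.2]; push_cast; ring

lemma u_cos (θ : ℝ) (k : ℕ) : sin θ * u (cos θ) k = sin (k * θ) ∧
    sin θ * u (cos θ) (k + 1) = sin (k * θ + θ) := by
  induction k with
  | zero => simp [u]
  | succ k ih =>
    refine ⟨by push_cast; rw [ih.2]; ring_nf, ?_⟩
    rw [u, mul_sub, mul_left_comm, ih.1, ih.2]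
    have : ((k + 1 : ℕ) : ℝ) * θ + θ = k * θ + θ + θ := by push_cast; ring
    rw [this]
    simp only [sin_add, cos_add]
    have hs := sin_sq_add_cos_sq θ
    linear_combination sin (k * θ) * hs

lemma u_nonneg (m : ℕ) (h1 : m ≠ 1) (k : ℕ) (hk : m = 0 ∨ k ≤ m) :
    0 ≤ u (if m = 0 then 1 else cos (π / m)) k := by
  split_ifs with h
  · rw [(u_one k).1]; positivity
  · have hpos := theta_facts m h h1
    have hk : k ≤ m := by tauto
    have h2 := (u_cos (π / m) k).1
    have hm : (0 : ℝ) < m := by exact_mod_cast Nat.pos_of_ne_zero h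
    have h3 : 0 ≤ sin (k * (π / m)) := by
      apply sin_nonneg_of_nonneg_of_le_pi
      · positivity
      · have : (k : ℝ) ≤ m := by exact_mod_cast hk
        calc (k : ℝ) * (π / m) ≤ m * (π / m) := by gcongr
          _ = π := by field_simp
    rw [← h2] at h3
    exact nonneg_of_mul_nonneg_right h3 hpos

variable {M : CoxeterMatrix (Fin n)}

lemma alt_apply (B : Matrix (Fin n) (Fin n) ℝ) (h1 : ∀ i, B i i = 1)
    {W : Type*} [Group W] (cs : CoxeterSystem M W)
    (ρ : W →* Module.End ℝ (Fin n → ℝ)) (hρ : ∀ i, ρ (cs.simple i) = refl B i)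
    (s t : Fin n) (hst : B t s = B s t) (k : ℕ) :
    ρ (cs.wordProd (alternatingWord s t k)) (e s) =
      u (- B s t) (k + 1) • e (if Even k then s else t) +
      u (- B s t) k • e (if Even k then t else s) := by
  induction k with
  | zero => simp [u, alternatingWord]
  | succ k ih =>
    rw [alternatingWord_succ', wordProd_cons, map_mul, Module.End.mul_apply, ih, hρ, u]
    by_cases hk : Even k
    · have hk' : ¬ Even (k + 1) := by simp [hk, parity_simps]
      simp only [hk, hk', if_true, if_false, map_add, map_smul, refl_e, h1, hst]
      module
    · have hk' : Even (k + 1) := by simp [hk, parity_simps]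
      simp only [hk, hk', if_true, if_false, map_add, map_smul, refl_e, h1, hst]
      module

lemma root_nonneg (B : Matrix (Fin n) (Fin n) ℝ)
    (hB : ∀ i j, B i j = if M i j = 0 then -1 else -Real.cos (π / (M i j : ℝ)))
    (h1 : ∀ i, B i i = 1) (hsymm : ∀ i j, B i j = B j i)
    {W : Type*} [Group W] (cs : CoxeterSystem M W)
    (ρ : W →* Module.End ℝ (Fin n → ℝ)) (hρ : ∀ i, ρ (cs.simple i) = refl B i) (N : ℕ) :
    ∀ (w : W) (s : Fin n), cs.length w = N → cs.length w < cs.length (w * cs.simple s) →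
      ∀ j, 0 ≤ ρ w (e s) j := by
  induction N using Nat.strong_induction_on with
  | _ N ih =>
  intro w s hN hlt j
  by_cases hw : w = 1
  · subst hw
    simp only [map_one, Module.End.one_apply, e, Pi.single_apply]
    split_ifs <;> simp
  obtain ⟨t, ht⟩ := cs.exists_rightDescent_of_ne_one hw
  rw [isRightDescent_iff] at ht
  have hne : s ≠ t := by rintro rfl; omega
  let P : ℕ → Prop := fun k => cs.length (w * (cs.wordProd (alternatingWord s t k))⁻¹) + k =
    cs.length w
  have hP1 : P 1 := by simp [P, alternatingWord, ht]
  classical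
  obtain ⟨k, hk1, hPk, hmax⟩ : ∃ k, 1 ≤ k ∧ P k ∧ ¬ P (k + 1) := by
    have hb : ∀ k, P k → k ≤ cs.length w := by intro k hk; simp only [P] at hk; omega
    have h1b := hb 1 hP1
    refine ⟨Nat.findGreatest P (cs.length w), Nat.le_findGreatest h1b hP1,
      Nat.findGreatest_spec h1b hP1, fun h => ?_⟩
    have := Nat.le_findGreatest (hb _ h) h
    omega
  -- the stripped element
  obtain ⟨v, hv⟩ : ∃ v, v = w * (cs.wordProd (alternatingWord s t k))⁻¹ := ⟨_, rfl⟩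
  have hwv : w = v * cs.wordProd (alternatingWord s t k) := by rw [hv]; group
  have hlv : cs.length v + k = cs.length w := by rw [hv]; exact hPk
  -- next letter
  have hb : cs.length v < cs.length (v * cs.simple (if Even k then t else s)) := by
    have h2 : w * (cs.wordProd (alternatingWord s t (k + 1)))⁻¹ =
        v * cs.simple (if Even k then t else s) := by
      rw [alternatingWord_succ', wordProd_cons, _root_.mul_inv_rev, inv_simple, ← mul_assoc, hv]
    simp only [P, h2] at hmax
    rcases cs.length_mul_simple v (if Even k then t else s) with h | h <;> omega
  have ha : cs.length v < cs.length (v * cs.simple (if Even k then s else t)) := by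
    obtain ⟨k', rfl⟩ : ∃ k', k = k' + 1 := ⟨k - 1, by omega⟩
    have hx : (if Even (k' + 1) then s else t) = (if Even k' then t else s) := by
      by_cases hk : Even k' <;> simp [hk, parity_simps]
    rw [hx]
    have h3 : w = (v * cs.simple (if Even k' then t else s)) *
        cs.wordProd (alternatingWord s t k') := by
      rw [hwv, alternatingWord_succ', wordProd_cons, mul_assoc]
    have h4 := cs.length_mul_le (v * cs.simple (if Even k' then t else s))
      (cs.wordProd (alternatingWord s t k'))
    rw [← h3] at h4
    have h5 := cs.length_wordProd_le (alternatingWord s t k')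
    rw [length_alternatingWord] at h5
    omega
  have hM1 : M s t ≠ 1 := M.off_diagonal s t hne
  have hkm : M s t = 0 ∨ k + 1 ≤ M s t := by
    by_contra! hcon
    obtain ⟨hm0, hcon⟩ := hcon
    have hr := cs.not_isReduced_alternatingWord t s (m := k + 1)
      (by rwa [M.symmetric]) (by rw [M.symmetric]; omega)
    have hle := cs.length_wordProd_le (alternatingWord t s (k + 1))
    unfold CoxeterSystem.IsReduced at hr
    have hw2 : w * cs.simple s = v * cs.wordProd (alternatingWord t s (k + 1)) := by
      rw [hwv, alternatingWord_succ, wordProd_concat, mul_assoc]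
    have h6 := cs.length_mul_le v (cs.wordProd (alternatingWord t s (k + 1)))
    rw [← hw2] at h6
    rw [length_alternatingWord] at hr hle
    omega
  have hval := alt_apply B h1 cs ρ hρ s t (hsymm t s) k
  have hc : - B s t = if M s t = 0 then 1 else cos (π / M s t) := by
    rw [hB]; split_ifs <;> simp
  rw [hwv, map_mul, Module.End.mul_apply, hval, map_add, map_smul, map_smul, hc]
  have i1 := ih (cs.length v) (by omega) v _ rfl ha j
  have i2 := ih (cs.length v) (by omega) v _ rfl hb j
  have u1 := u_nonneg (M s t) hM1 (k + 1) hkm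
  have u2 := u_nonneg (M s t) hM1 k (by omega)
  simp only [Pi.add_apply, Pi.smul_apply, smul_eq_mul]
  positivity

/-- Bilinear form. -/
noncomputable def bf (B : Matrix (Fin n) (Fin n) ℝ) (x y : Fin n → ℝ) : ℝ := x ⬝ᵥ B *ᵥ y

lemma bf_e (B : Matrix (Fin n) (Fin n) ℝ) (i : Fin n) (y : Fin n → ℝ) :
    bf B (e i) y = (B *ᵥ y) i := by simp [bf, e]

lemma bf_comm (B : Matrix (Fin n) (Fin n) ℝ) (hsymm : ∀ i j, B i j = B j i)
    (x y : Fin n → ℝ) : bf B x y = bf B y x := by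
  have hT : Bᵀ = B := by ext i j; exact hsymm j i
  unfold bf
  rw [dotProduct_mulVec, dotProduct_comm, ← mulVec_transpose, hT]

lemma bf_sub_left (B : Matrix (Fin n) (Fin n) ℝ) (x x' y : Fin n → ℝ) :
    bf B (x - x') y = bf B x y - bf B x' y := by simp [bf, sub_dotProduct]
lemma bf_sub_right (B : Matrix (Fin n) (Fin n) ℝ) (x y y' : Fin n → ℝ) :
    bf B x (y - y') = bf B x y - bf B x y' := by simp [bf, mulVec_sub, dotProduct_sub]
lemma bf_smul_left (B : Matrix (Fin n) (Fin n) ℝ) (a : ℝ) (x y : Fin n → ℝ) :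
    bf B (a • x) y = a * bf B x y := by simp [bf]
lemma bf_smul_right (B : Matrix (Fin n) (Fin n) ℝ) (a : ℝ) (x y : Fin n → ℝ) :
    bf B x (a • y) = a * bf B x y := by simp [bf, mulVec_smul]

lemma bf_inv (B : Matrix (Fin n) (Fin n) ℝ) (h1 : ∀ i, B i i = 1)
    (hsymm : ∀ i j, B i j = B j i)
    {W : Type*} [Group W] (cs : CoxeterSystem M W)
    (ρ : W →* Module.End ℝ (Fin n → ℝ)) (hρ : ∀ i, ρ (cs.simple i) = refl B i) (w : W) :
    ∀ x y, bf B (ρ w x) (ρ w y) = bf B x y := by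
  induction w using cs.simple_induction_left with
  | one => simp
  | mul_simple_left w i ih =>
    intro x y
    rw [map_mul, Module.End.mul_apply, Module.End.mul_apply, ← ih x y, hρ, refl_apply, refl_apply]
    simp only [bf_sub_left, bf_sub_right, bf_smul_left, bf_smul_right, bf_e, mulVec_e, h1,
      bf_comm B hsymm _ (e i)]
    ring

/-- An element which keeps the base point in the open chamber is trivial. -/
lemma eq_one_of_chamber (B : Matrix (Fin n) (Fin n) ℝ)
    (hB : ∀ i j, B i j = if M i j = 0 then -1 else -Real.cos (π / (M i j : ℝ)))
    (h1 : ∀ i, B i i = 1) (hsymm : ∀ i j, B i j = B j i)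
    {W : Type*} [Group W] (cs : CoxeterSystem M W)
    (ρ : W →* Module.End ℝ (Fin n → ℝ)) (hρ : ∀ i, ρ (cs.simple i) = refl B i)
    (x : Fin n → ℝ) (hx : ∀ i, 0 < (B *ᵥ x) i) (w : W) (hwx : ∀ i, 0 < (B *ᵥ (ρ w x)) i) :
    w = 1 := by
  by_contra hw
  obtain ⟨i, hi⟩ := cs.exists_rightDescent_of_ne_one (inv_ne_one.mpr hw)
  have hroot := root_nonneg B hB h1 hsymm cs ρ hρ _ (w⁻¹ * cs.simple i) i rfl
    (by simpa [IsRightDescent] using hi)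
  rw [map_mul, Module.End.mul_apply, hρ, refl_self B h1, map_neg] at hroot
  have h2 : bf B (e i) (ρ w x) = bf B (ρ w⁻¹ (e i)) x := by
    rw [← bf_inv B h1 hsymm cs ρ hρ w⁻¹, ← Module.End.mul_apply, ← map_mul]; simp
  have h3 : bf B (ρ w⁻¹ (e i)) x ≤ 0 := by
    unfold bf dotProduct
    apply Finset.sum_nonpos
    intro j _
    have := hroot j
    rw [Pi.neg_apply] at this
    exact mul_nonpos_of_nonpos_of_nonneg (by linarith) (hx j).le
  have := hwx i
  rw [← bf_e] at this
  linarith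

lemma finite_of_posDef (B : Matrix (Fin n) (Fin n) ℝ)
    (hB : ∀ i j, B i j = if M i j = 0 then -1 else -Real.cos (π / (M i j : ℝ)))
    (h1 : ∀ i, B i i = 1) (hsymm : ∀ i j, B i j = B j i)
    {W : Type*} [Group W] (cs : CoxeterSystem M W)
    (ρ : W →* Module.End ℝ (Fin n → ℝ)) (hρ : ∀ i, ρ (cs.simple i) = refl B i)
    (hpd : B.PosDef) : Finite W := by
  have hdet : IsUnit B.det := (Matrix.isUnit_iff_isUnit_det B).mp hpd.isUnit
  have hCS : ∀ v i, (B *ᵥ v) i ^ 2 ≤ bf B v v := by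
    intro v i
    have h := hpd.posSemidef.dotProduct_mulVec_nonneg (v - (B *ᵥ v) i • e i)
    change 0 ≤ bf B (v - (B *ᵥ v) i • e i) (v - (B *ᵥ v) i • e i) at h
    simp only [bf_sub_left, bf_sub_right, bf_smul_left, bf_smul_right, bf_e, mulVec_e, h1,
      bf_comm B hsymm _ (e i)] at h
    nlinarith
  obtain ⟨x, hx⟩ : ∃ x, B *ᵥ x = fun _ => 1 :=
    ⟨B⁻¹ *ᵥ (fun _ => 1), by rw [mulVec_mulVec, mul_nonsing_inv B hdet, one_mulVec]⟩
  by_contra hfin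
  rw [not_finite_iff_infinite] at hfin
  -- the bounded family
  let g : W → (Fin n → ℝ) := fun w => B *ᵥ (ρ w x)
  let R : ℝ := bf B x x + 1
  have hg : ∀ w, g w ∈ Set.Icc (fun _ : Fin n => -R) (fun _ => R) := by
    intro w
    have h2 : ∀ i, |g w i| ≤ R := by
      intro i
      have h3 := hCS (ρ w x) i
      rw [bf_inv B h1 hsymm cs ρ hρ w] at h3
      have h4 : 0 ≤ bf B x x := le_trans (sq_nonneg _) h3
      apply abs_le_of_sq_le_sq _ (by simp only [R]; linarith)
      simp only [g, R]; nlinarith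
    exact ⟨fun i => (abs_le.mp (h2 i)).1, fun i => (abs_le.mp (h2 i)).2⟩
  let Q : (Fin n → ℝ) → ℝ := fun y => (B⁻¹ *ᵥ y) ⬝ᵥ y
  have hQc : Continuous Q := by
    apply Continuous.dotProduct
    · exact Continuous.matrix_mulVec continuous_const continuous_id
    · exact continuous_id
  have hQ : ∀ v, Q (B *ᵥ v) = bf B v v := by
    intro v
    simp only [Q, bf, mulVec_mulVec, nonsing_inv_mul B hdet, one_mulVec]
  obtain ⟨δ, hδ, hball⟩ : ∃ δ > 0, ∀ y, dist y 0 < δ → Q y < 1 := by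
    have h0 : Q 0 < 1 := by simp [Q]
    have := hQc.continuousAt.eventually_lt (continuousAt_const (y := (1 : ℝ))) h0
    exact Metric.eventually_nhds_iff.mp this
  obtain ⟨T, -, hT, hcov⟩ := (isCompact_Icc (a := (fun _ : Fin n => -R)) 
    (b := (fun _ => R))).finite_cover_balls (half_pos hδ)
  have hch : ∀ w, ∃ y : T, dist (g w) y < δ / 2 := by
    intro w
    have := hcov (hg w)
    simp only [Set.mem_iUnion, Metric.mem_ball] at this
    obtain ⟨y, hy, h⟩ := this
    exact ⟨⟨y, hy⟩, h⟩
  choose f hf using hch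
  haveI := hT.to_subtype
  obtain ⟨w, w', hne, heq⟩ := Finite.exists_ne_map_eq_of_infinite f
  have hd : dist (g w) (g w') < δ := by
    have a1 := hf w
    have a2 := hf w'
    rw [← heq] at a2
    have := dist_triangle_right (g w) (g w') (f w)
    linarith
  have hq : Q (g w - g w') < 1 := hball _ (by rwa [dist_zero_right, ← dist_eq_norm])
  have hsub : g w - g w' = B *ᵥ (ρ w x - ρ w' x) := by simp [g, mulVec_sub]
  rw [hsub, hQ, ← bf_inv B h1 hsymm cs ρ hρ w'⁻¹, map_sub, ← Module.End.mul_apply,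
    ← Module.End.mul_apply, ← map_mul, ← map_mul, inv_mul_cancel, map_one,
    Module.End.one_apply] at hq
  have h1' : w'⁻¹ * w = 1 := by
    apply eq_one_of_chamber B hB h1 hsymm cs ρ hρ x (by intro i; rw [hx]; exact one_pos)
    intro i
    have h5 := hCS (ρ (w'⁻¹ * w) x - x) i
    rw [mulVec_sub, Pi.sub_apply, hx] at h5
    nlinarith
  exact hne (inv_mul_eq_one.mp h1').symm

lemma posDef_of_finite (B : Matrix (Fin n) (Fin n) ℝ)
    (h1 : ∀ i, B i i = 1) (hsymm : ∀ i j, B i j = B j i)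
    {W : Type*} [Group W] (cs : CoxeterSystem M W)
    (ρ : W →* Module.End ℝ (Fin n → ℝ)) (hρ : ∀ i, ρ (cs.simple i) = refl B i)
    (hfin : Finite W) : B.PosDef := by
  haveI := Fintype.ofFinite W
  -- averaged inner product
  let G : (Fin n → ℝ) →ₗ[ℝ] (Fin n → ℝ) →ₗ[ℝ] ℝ :=
    ∑ w : W, (dotProductBilin ℝ ℝ).compl₁₂ (ρ w) (ρ w)
  have hG : ∀ x y, G x y = ∑ w : W, ρ w x ⬝ᵥ ρ w y := by
    intro x y; simp [G, LinearMap.sum_apply]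
  have hGsymm : ∀ x y, G x y = G y x := by
    intro x y; simp only [hG]; exact Finset.sum_congr rfl fun w _ => dotProduct_comm _ _
  have hGpos : ∀ x, x ≠ 0 → 0 < G x x := by
    intro x hx
    rw [hG]
    have hnn : ∀ y : Fin n → ℝ, 0 ≤ y ⬝ᵥ y := fun y => 
      Finset.sum_nonneg fun i _ => mul_self_nonneg _
    refine Finset.sum_pos' (fun w _ => hnn _) ⟨1, Finset.mem_univ _, ?_⟩
    rw [map_one, Module.End.one_apply]
    exact lt_of_le_of_ne (hnn x) fun h => hx (dotProduct_self_eq_zero.mp h.symm)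
  have hGinv : ∀ v x y, G (ρ v x) (ρ v y) = G x y := by
    intro v x y
    simp only [hG, ← Module.End.mul_apply, ← map_mul]
    exact Fintype.sum_equiv (Equiv.mulRight v) _ _ fun w => rfl
  have hGB : ∀ i x, G x (e i) = (B *ᵥ x) i * G (e i) (e i) := by
    intro i x
    have h := hGinv (cs.simple i) x (e i)
    rw [hρ, refl_self B h1, refl_apply] at h
    simp only [map_sub, map_neg, map_smul, LinearMap.sub_apply, LinearMap.smul_apply,
      smul_eq_mul] at h
    linarith
  have hGe : ∀ i j, G (e i) (e j) = B i j * G (e i) (e i) := by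
    intro i j; rw [hGsymm, hGB, mulVec_e]
  have he : ∀ i : Fin n, e i ≠ 0 := by intro i; simp [e]
  have hc : ∀ i, 0 < G (e i) (e i) := fun i => hGpos _ (he i)
  have hBG : ∀ i j, B i j = G (e i) (e j) / (√(G (e i) (e i)) * √(G (e j) (e j))) := by
    intro i j
    have := hc i
    by_cases hz : B i j = 0
    · rw [hGe, hz]; simp
    · have hcc : G (e i) (e i) = G (e j) (e j) := by
        have a := hGe i j
        rw [hGsymm, hGe, hsymm j i] at a
        exact (mul_left_cancel₀ hz a).symm
      rw [hGe i j, ← hcc, mul_self_sqrt (hc i).le]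
      field_simp
  apply PosDef.of_dotProduct_mulVec_pos
  · ext i j; simp [hsymm j i]
  intro x hx
  let y : Fin n → ℝ := fun i => x i / √(G (e i) (e i))
  have hy : y ≠ 0 := by
    intro h
    apply hx
    funext i
    have h2 := congrFun h i
    simp only [y, Pi.zero_apply, div_eq_zero_iff, (sqrt_pos.mpr (hc i)).ne', or_false] at h2
    exact h2
  have hyd : y = ∑ i, y i • e i := by
    simp only [e]; exact pi_eq_sum_univ' y 
  have hpos := hGpos y hy
  have : star x ⬝ᵥ B *ᵥ x = G y y := by
    conv_rhs => rw [hyd]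
    simp only [map_sum, map_smul, LinearMap.sum_apply, LinearMap.smul_apply, smul_eq_mul]
    simp only [star_trivial, dotProduct, mulVec, Finset.mul_sum]
    rw [Finset.sum_comm]
    refine Finset.sum_congr rfl fun i _ => Finset.sum_congr rfl fun j _ => ?_
    rw [hBG j i]
    simp only [y]
    ring
  rw [this]
  exact hpos

end CoxGeom

/-- The canonical bilinear form of the geometric representation of a Coxeter
system, given by `B i j = -cos (π / mᵢⱼ)` (and `-1` when `mᵢⱼ = ∞`, encoded as `mᵢⱼ = 0`),
is positive definite if and only if the Coxeter group is finite. -/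
theorem coxeter_form_posDef_iff_finite (n : ℕ) (M : CoxeterMatrix (Fin n))
    (B : Matrix (Fin n) (Fin n) ℝ)
    (hB : ∀ i j, B i j = if M i j = 0 then -1 else -Real.cos (π / (M i j : ℝ))) :
    B.PosDef ↔ Finite M.Group := by
  have h1 : ∀ i, B i i = 1 := by intro i; rw [hB, M.diagonal]; simp
  have hsymm : ∀ i j, B i j = B j i := by intro i j; rw [hB, hB, M.symmetric]
  have hlift : M.IsLiftable (CoxGeom.refl B) := by
    intro s t
    by_cases h0 : M s t = 0
    · rw [h0, pow_zero]
    by_cases hst : s = t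
    · subst hst
      rw [M.diagonal, pow_one]
      refine LinearMap.ext fun z => ?_
      rw [Module.End.mul_apply, CoxGeom.refl_apply B s z, map_sub, map_smul,
        CoxGeom.refl_self B h1, CoxGeom.refl_apply, Module.End.one_apply]
      module
    · have hb : B s t = - cos (π / M s t) := by rw [hB, if_neg h0]
      exact CoxGeom.pow_eq_one B h1 s t _ h0 (M.off_diagonal s t hst) hb (by rw [hsymm, hb])
  let cs := M.toCoxeterSystem
  have hρ : ∀ i, cs.lift ⟨_, hlift⟩ (cs.simple i) = CoxGeom.refl B i :=
    fun i => cs.lift_apply_simple hlift i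
  exact ⟨CoxGeom.finite_of_posDef B hB h1 hsymm cs _ hρ,
    CoxGeom.posDef_of_finite B h1 hsymm cs _ hρ⟩
end

section
/- In a spherical building Δ, all panels contained in a given wall M of an apartment are of the same kind: either all are thick or all are thin. -/
/-- A (simplicial) spherical building, encoded as a simplicial complex on a vertex type
together with a system of finite, thin apartments satisfying the building axioms:
(B0) every face lies in a chamber (a face of maximal cardinality `rank`);
(B1) any two faces lie in a common apartment;
(B2) for any two apartments containing faces `s` and `t` there is an isomorphism between
them fixing `s` and `t` (and all their faces) pointwise.
Sphericity is encoded by the finiteness of the apartments (Coxeter complexes of finite,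
i.e. spherical, Coxeter groups). -/
structure SphericalBuilding (V : Type*) where
  faces : Set (Finset V)
  downClosed : ∀ ⦃s⦄, s ∈ faces → ∀ ⦃t : Finset V⦄, t ⊆ s → t ∈ faces
  rank : ℕ
  rank_pos : 0 < rank
  card_le : ∀ s ∈ faces, s.card ≤ rank
  face_in_chamber : ∀ s ∈ faces, ∃ c ∈ faces, s ⊆ c ∧ c.card = rank
  apartments : Set (Set (Finset V))
  apartments_sub : ∀ A ∈ apartments, A ⊆ faces
  apartments_downClosed : ∀ A ∈ apartments, ∀ ⦃s⦄, s ∈ A → ∀ ⦃t : Finset V⦄, t ⊆ s → t ∈ A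
  apartments_finite : ∀ A ∈ apartments, A.Finite
  /-- each apartment is thin: a panel of `A` lies in exactly two chambers of `A` -/
  apartments_thin : ∀ A ∈ apartments, ∀ p ∈ A, p.card = rank - 1 →
    ∃ c d : Finset V, c ∈ A ∧ d ∈ A ∧ c.card = rank ∧ d.card = rank ∧ c ≠ d ∧
      p ⊆ c ∧ p ⊆ d ∧ ∀ e ∈ A, e.card = rank → p ⊆ e → e = c ∨ e = d
  /-- each apartment is gallery connected -/
  apartments_connected : ∀ A ∈ apartments, ∀ c ∈ A, ∀ d ∈ A,
    c.card = rank → d.card = rank →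
    Relation.ReflTransGen (fun a b : Finset V => a ∈ A ∧ b ∈ A ∧ a.card = rank ∧
      b.card = rank ∧ a ≠ b ∧ ∃ p ∈ A, p.card = rank - 1 ∧ p ⊆ a ∧ p ⊆ b) c d
  pair_in_apartment : ∀ s ∈ faces, ∀ t ∈ faces, ∃ A ∈ apartments, s ∈ A ∧ t ∈ A
  compatible : ∀ A ∈ apartments, ∀ B ∈ apartments, ∀ s t : Finset V,
    s ∈ A → s ∈ B → t ∈ A → t ∈ B →
    ∃ φ : Finset V → Finset V, Set.BijOn φ A B ∧
      (∀ u ∈ A, ∀ w ∈ A, (u ⊆ w ↔ φ u ⊆ φ w)) ∧ (∀ u ∈ A, (φ u).card = u.card) ∧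
      (∀ u ∈ A, (u ⊆ s ∨ u ⊆ t) → φ u = u)

namespace SphericalBuilding

variable {V : Type*} [DecidableEq V] (Δ : SphericalBuilding V)

/-- A chamber is a face of maximal cardinality. -/
def IsChamber (c : Finset V) : Prop := c ∈ Δ.faces ∧ c.card = Δ.rank

/-- A panel is a codimension one face of a chamber. -/
def IsPanel (p : Finset V) : Prop := p ∈ Δ.faces ∧ p.card = Δ.rank - 1

/-- A panel is thick if it is contained in at least three chambers. -/
def IsThickPanel (p : Finset V) : Prop := Δ.IsPanel p ∧
  ∃ c₁ c₂ c₃ : Finset V, Δ.IsChamber c₁ ∧ Δ.IsChamber c₂ ∧ Δ.IsChamber c₃ ∧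
    p ⊆ c₁ ∧ p ⊆ c₂ ∧ p ⊆ c₃ ∧ c₁ ≠ c₂ ∧ c₁ ≠ c₃ ∧ c₂ ≠ c₃

/-- A panel is thin if it is contained in exactly two chambers. -/
def IsThinPanel (p : Finset V) : Prop := Δ.IsPanel p ∧
  ∃ c₁ c₂ : Finset V, Δ.IsChamber c₁ ∧ Δ.IsChamber c₂ ∧ p ⊆ c₁ ∧ p ⊆ c₂ ∧ c₁ ≠ c₂ ∧
    ∀ c, Δ.IsChamber c → p ⊆ c → c = c₁ ∨ c = c₂

/-- Two chambers are thin-adjacent if their intersection is a thin panel. -/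
def ThinAdj (c c' : Finset V) : Prop :=
  Δ.IsChamber c ∧ Δ.IsChamber c' ∧ c ≠ c' ∧ Δ.IsThinPanel (c ∩ c')

/-- Thin-equivalence: two chambers are thin-equivalent if they are joined by a thin
gallery, i.e. a gallery whose consecutive chambers are thin-adjacent. -/
def ThinEquiv : Finset V → Finset V → Prop := Relation.ReflTransGen Δ.ThinAdj

/-- Two chambers are adjacent if their intersection is a panel. -/
def Adj (c c' : Finset V) : Prop :=
  Δ.IsChamber c ∧ Δ.IsChamber c' ∧ c ≠ c' ∧ Δ.IsPanel (c ∩ c')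

/-- A gallery is a sequence of chambers in which consecutive chambers are adjacent. -/
def IsGallery (γ : List (Finset V)) : Prop :=
  (∀ c ∈ γ, Δ.IsChamber c) ∧ γ.Chain' Δ.Adj

end SphericalBuilding

namespace SphericalBuilding

variable {V : Type*} [DecidableEq V] (Δ : SphericalBuilding V)

/-- isomorphism of apartments -/
def AIso (A B : Set (Finset V)) (φ : Finset V → Finset V) : Prop :=
  Set.BijOn φ A B ∧ (∀ u ∈ A, ∀ w ∈ A, (u ⊆ w ↔ φ u ⊆ φ w)) ∧ (∀ u ∈ A, (φ u).card = u.card)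

theorem AIso.comp {A B C : Set (Finset V)} {φ ψ : Finset V → Finset V}
    (h : AIso A B φ) (k : AIso B C ψ) : AIso A C (fun u => ψ (φ u)) := by
  refine ⟨k.1.comp h.1, fun u hu w hw => ?_, fun u hu => ?_⟩
  · rw [h.2.1 u hu w hw, k.2.1 _ (h.1.mapsTo hu) _ (h.1.mapsTo hw)]
  · rw [k.2.2 _ (h.1.mapsTo hu), h.2.2 u hu]

theorem AIso.id (A : Set (Finset V)) : AIso A A (fun u => u) :=
  ⟨Set.bijOn_id A, fun _ _ _ _ => Iff.rfl, fun _ _ => rfl⟩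

variable {Δ}

/-- two isos agreeing on the vertices of `u` agree on `u` -/
theorem agree_of_vertices {A B : Set (Finset V)} (hA : A ∈ Δ.apartments) (hB : B ∈ Δ.apartments)
    {φ ψ : Finset V → Finset V} (h : AIso A B φ) (k : AIso A B ψ) {u : Finset V} (hu : u ∈ A)
    (hv : ∀ w ∈ u, φ {w} = ψ {w}) : φ u = ψ u := by
  apply Finset.eq_of_subset_of_card_le
  · intro y hy
    have hyB : ({y} : Finset V) ∈ B :=
      Δ.apartments_downClosed B hB (h.1.mapsTo hu) (Finset.singleton_subset_iff.2 hy)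
    obtain ⟨t, ht, hty⟩ := h.1.surjOn hyB
    have hc : t.card = 1 := by rw [← h.2.2 t ht, hty]; simp
    obtain ⟨w, rfl⟩ := Finset.card_eq_one.1 hc
    have hwu : ({w} : Finset V) ⊆ u := by
      rw [h.2.1 _ ht _ hu, hty]; exact Finset.singleton_subset_iff.2 hy
    have h1 := (k.2.1 _ ht _ hu).1 hwu
    rw [← hv w (Finset.singleton_subset_iff.1 hwu), hty] at h1
    exact Finset.singleton_subset_iff.1 h1
  · rw [h.2.2 u hu, k.2.2 u hu]

theorem thin_eq {A : Set (Finset V)} (hA : A ∈ Δ.apartments) {p a b c : Finset V}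
    (hp : p ∈ A) (hpc : p.card = Δ.rank - 1)
    (ha : a ∈ A) (hac : a.card = Δ.rank) (hpa : p ⊆ a)
    (hb : b ∈ A) (hbc : b.card = Δ.rank) (hpb : p ⊆ b)
    (hc : c ∈ A) (hcc : c.card = Δ.rank) (hpc' : p ⊆ c) (hab : a ≠ b) (hca : c ≠ a) : c = b := by
  obtain ⟨x, y, -, -, -, -, -, -, -, H⟩ := Δ.apartments_thin A hA p hp hpc
  have h1 := H a ha hac hpa
  have h2 := H b hb hbc hpb
  have h3 := H c hc hcc hpc'
  grind

theorem rigid {A B : Set (Finset V)} (hA : A ∈ Δ.apartments) (hB : B ∈ Δ.apartments)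
    {φ ψ : Finset V → Finset V} (h : AIso A B φ) (k : AIso A B ψ) {g c : Finset V}
    (hg : g ∈ A) (hgc : g.card = Δ.rank) (hag : ∀ u ⊆ g, φ u = ψ u)
    (hc : c ∈ A) (hcc : c.card = Δ.rank) : ∀ u ⊆ c, φ u = ψ u := by
  have hconn := Δ.apartments_connected A hA g hg c hc hgc hcc
  clear hc hcc
  induction hconn with
  | refl => exact hag
  | @tail a b _ hab ih =>
    obtain ⟨ha, hb, hac, hbc, hne, p, hp, hpc, hpa, hpb⟩ := hab
    have hpp : φ p = ψ p := ih p hpa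
    have haa : φ a = ψ a := ih a subset_rfl
    have hbb : φ b = ψ b := by
      refine thin_eq hB (p := φ p) (a := φ a) (h.1.mapsTo hp) (by rw [h.2.2 p hp, hpc])
        (h.1.mapsTo ha) (by rw [h.2.2 a ha, hac]) ((h.2.1 p hp a ha).1 hpa)
        (k.1.mapsTo hb) (by rw [k.2.2 b hb, hbc]) (by rw [hpp]; exact (k.2.1 p hp b hb).1 hpb)
        (h.1.mapsTo hb) (by rw [h.2.2 b hb, hbc]) ((h.2.1 p hp b hb).1 hpb) ?_ ?_
      · rw [haa]; exact fun e => hne (k.1.injOn ha hb e)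
      · exact fun e => hne (h.1.injOn hb ha e).symm
    intro u hub
    have huA : u ∈ A := Δ.apartments_downClosed A hA hb hub
    refine agree_of_vertices hA hB h k huA fun w hw => ?_
    have hwb : ({w} : Finset V) ⊆ b := Finset.singleton_subset_iff.2 (hub hw)
    have hwA : ({w} : Finset V) ∈ A := Δ.apartments_downClosed A hA hb hwb
    by_cases hwp : w ∈ p
    · exact ih _ ((Finset.singleton_subset_iff.2 hwp).trans hpa)
    · have hr := Δ.rank_pos
      have hcd : (φ b \ φ p).card = 1 := by
        rw [Finset.card_sdiff_of_subset ((h.2.1 p hp b hb).1 hpb), h.2.2 b hb, h.2.2 p hp]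
        omega
      obtain ⟨z, hz⟩ := Finset.card_eq_one.1 hcd
      have key : ∀ χ : Finset V → Finset V, AIso A B χ → χ b = φ b → χ p = φ p → χ {w} = {z} := by
        intro χ hχ hχb hχp
        have h1 : (χ {w}).card = 1 := by rw [hχ.2.2 _ hwA]; simp
        obtain ⟨y, hy⟩ := Finset.card_eq_one.1 h1
        have h2 := (hχ.2.1 _ hwA b hb).1 hwb
        have h3 : ¬ χ {w} ⊆ χ p := fun h => hwp
          (Finset.singleton_subset_iff.1 ((hχ.2.1 _ hwA p hp).2 h))
        rw [hy, hχb, Finset.singleton_subset_iff] at h2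
        rw [hy, hχp, Finset.singleton_subset_iff] at h3
        have h4 : y ∈ φ b \ φ p := Finset.mem_sdiff.2 ⟨h2, h3⟩
        rw [hz, Finset.mem_singleton] at h4
        rw [hy, h4]
      rw [key φ h rfl rfl, key ψ k hbb.symm hpp.symm]

variable (Δ) in
/-- the relation `v` is the image of `u` under the retraction onto `A` centred at `g` -/
def Retr (A : Set (Finset V)) (g u v : Finset V) : Prop :=
  ∃ B ∈ Δ.apartments, g ∈ B ∧ u ∈ B ∧ ∃ φ, AIso B A φ ∧ (∀ w ⊆ g, φ w = w) ∧ φ u = v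

theorem retr_exists {A : Set (Finset V)} (hA : A ∈ Δ.apartments) {g u : Finset V} (hg : g ∈ A)
    (hu : u ∈ Δ.faces) : ∃ v, Δ.Retr A g u v := by
  obtain ⟨B, hB, hgB, huB⟩ := Δ.pair_in_apartment g (Δ.apartments_sub A hA hg) u hu
  obtain ⟨φ, h1, h2, h3, h4⟩ := Δ.compatible B hB A hA g g hgB hg hgB hg
  exact ⟨φ u, B, hB, hgB, huB, φ, ⟨h1, h2, h3⟩,
    fun w hw => h4 w (Δ.apartments_downClosed B hB hgB hw) (Or.inl hw), rfl⟩

theorem retr_self {A : Set (Finset V)} (hA : A ∈ Δ.apartments) {g u : Finset V} (hg : g ∈ A)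
    (hu : u ∈ A) : Δ.Retr A g u u :=
  ⟨A, hA, hg, hu, _, AIso.id A, fun _ _ => rfl, rfl⟩

theorem retr_unique {A : Set (Finset V)} (hA : A ∈ Δ.apartments) {g u v v' : Finset V}
    (hgc : g.card = Δ.rank) (huc : u.card = Δ.rank ∨ u.card = Δ.rank - 1)
    (h : Δ.Retr A g u v) (h' : Δ.Retr A g u v') : v = v' := by
  obtain ⟨B, hB, hgB, huB, φ, hφ, hφg, rfl⟩ := h
  obtain ⟨B', hB', hgB', huB', φ', hφ', hφg', rfl⟩ := h'
  obtain ⟨ψ, h1, h2, h3, h4⟩ := Δ.compatible B hB B' hB' g u hgB hgB' huB huB'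
  have hc : ∃ c ∈ B, c.card = Δ.rank ∧ u ⊆ c := by
    rcases huc with huc | huc
    · exact ⟨u, huB, huc, subset_rfl⟩
    · obtain ⟨c, -, hc, -, hcc, -, -, huc', -⟩ := Δ.apartments_thin B hB u huB huc
      exact ⟨c, hc, hcc, huc'⟩
  obtain ⟨c, hcB, hcc, huc'⟩ := hc
  have := rigid hB hA hφ (AIso.comp ⟨h1, h2, h3⟩ hφ') hgB hgc (fun w hw => by
    rw [hφg w hw, h4 w (Δ.apartments_downClosed B hB hgB hw) (Or.inl hw), hφg' w hw])
    hcB hcc u huc'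
  rw [this, h4 u huB (Or.inr subset_rfl)]

theorem retr_sub {A : Set (Finset V)} {g u v p : Finset V}
    (h : Δ.Retr A g u v) (hpu : p ⊆ u) : ∃ q, q ⊆ v ∧ Δ.Retr A g p q := by
  obtain ⟨B, hB, hgB, huB, φ, hφ, hφg, rfl⟩ := h
  have hpB := Δ.apartments_downClosed B hB huB hpu
  exact ⟨φ p, (hφ.2.1 p hpB u huB).1 hpu, B, hB, hgB, hpB, φ, hφ, hφg, rfl⟩

theorem retr_mem {A : Set (Finset V)} {g u v : Finset V}
    (h : Δ.Retr A g u v) : v ∈ A ∧ v.card = u.card := by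
  obtain ⟨B, hB, hgB, huB, φ, hφ, hφg, rfl⟩ := h
  exact ⟨hφ.1.mapsTo huB, hφ.2.2 u huB⟩

theorem retr_eq_center {A : Set (Finset V)} {g u : Finset V}
    (h : Δ.Retr A g u g) : u = g := by
  obtain ⟨B, hB, hgB, huB, φ, hφ, hφg, e⟩ := h
  exact hφ.1.injOn huB hgB (by rw [e, hφg g subset_rfl])

variable (Δ) in
/-- chambers -/
abbrev Ch := {c : Finset V // Δ.IsChamber c}

variable (Δ) in
/-- the chamber graph -/
def chG : SimpleGraph Δ.Ch where
  Adj a b := a ≠ b ∧ ∃ p : Finset V, p.card = Δ.rank - 1 ∧ p ⊆ a.1 ∧ p ⊆ b.1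
  symm := ⟨fun _ _ ⟨h, p, h1, h2, h3⟩ => ⟨h.symm, p, h1, h3, h2⟩⟩
  loopless := ⟨fun _ h => h.1 rfl⟩

theorem chG_preconn : (Δ.chG).Preconnected := by
  rintro ⟨a, ha⟩ ⟨b, hb⟩
  obtain ⟨A, hA, haA, hbA⟩ := Δ.pair_in_apartment a ha.1 b hb.1
  have := Δ.apartments_connected A hA a haA b hbA ha.2 hb.2
  clear hbA
  induction this with
  | refl => exact SimpleGraph.Reachable.refl _
  | @tail x y _ hxy ih =>
    obtain ⟨hx, hy, hxc, hyc, hne, p, hp, hpc, hpx, hpy⟩ := hxy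
    have hx' : Δ.IsChamber x := ⟨Δ.apartments_sub A hA hx, hxc⟩
    refine (ih hx').trans (SimpleGraph.Adj.reachable ?_)
    exact ⟨fun e => hne (congrArg Subtype.val e), p, hpc, hpx, hpy⟩

theorem chG_conn (a : Δ.Ch) : (Δ.chG).Connected :=
  { preconnected := chG_preconn, nonempty := ⟨a⟩ }

theorem noexp {A : Set (Finset V)} (hA : A ∈ Δ.apartments) {ρ : Finset V → Finset V}
    (hρ : AIso A A ρ) {g : Finset V} (hg : g ∈ A) (hgc : g.card = Δ.rank) {a b : Δ.Ch}
    (w : (Δ.chG).Walk a b) : ∀ (a' b' : Δ.Ch) (s t : Finset V), Δ.Retr A g a.1 s →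
      Δ.Retr A g b.1 t → a'.1 = ρ s → b'.1 = ρ t → (Δ.chG).dist a' b' ≤ w.length := by
  induction w with
  | @nil u =>
    intro a' b' s t hs ht ha hb
    have : s = t := retr_unique hA hgc (Or.inl u.2.2) hs ht
    have : a' = b' := Subtype.ext (by rw [ha, hb, this])
    subst this
    simp
  | @cons u v z huv w ih =>
    intro a' b' s t hs ht ha hb
    obtain ⟨r, hr⟩ := retr_exists hA hg v.2.1
    have hrm := retr_mem hr
    have hsm := retr_mem hs
    have hrρ : Δ.IsChamber (ρ r) := ⟨Δ.apartments_sub A hA (hρ.1.mapsTo hrm.1), by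
      rw [hρ.2.2 r hrm.1, hrm.2, v.2.2]⟩
    have h1 := ih ⟨ρ r, hrρ⟩ b' r t hr ht rfl hb
    have h2 : (Δ.chG).dist a' ⟨ρ r, hrρ⟩ ≤ 1 := by
      by_cases e : a' = ⟨ρ r, hrρ⟩
      · rw [e]; simp
      · refine le_of_eq (SimpleGraph.dist_eq_one_iff_adj.2 ⟨e, ?_⟩)
        obtain ⟨-, p, hpc, hpu, hpv⟩ := huv
        obtain ⟨q, hq, hpq⟩ := retr_sub hs hpu
        obtain ⟨q', hq', hpq'⟩ := retr_sub hr hpv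
        have := retr_unique hA hgc (Or.inr hpc) hpq hpq'
        subst this
        have hqm := retr_mem hpq
        refine ⟨ρ q, ?_, ?_, ?_⟩
        · rw [hρ.2.2 q hqm.1, hqm.2, hpc]
        · rw [ha]; exact (hρ.2.1 q hqm.1 s hsm.1).1 hq
        · exact (hρ.2.1 q hqm.1 r hrm.1).1 hq'
    have h3 := (chG_conn a').dist_triangle (u := a') (v := ⟨ρ r, hrρ⟩) (w := b')
    rw [SimpleGraph.Walk.length_cons]
    omega

theorem exit_pair (S : Set (Finset V)) {a b : Δ.Ch}
    (w : (Δ.chG).Walk a b) (ha : a.1 ∈ S) (hb : b.1 ∉ S) :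
    ∃ u v : Δ.Ch, u.1 ∈ S ∧ v.1 ∉ S ∧ (Δ.chG).Adj u v ∧
      (Δ.chG).dist a u + 1 + (Δ.chG).dist v b ≤ w.length := by
  induction w with
  | nil => exact absurd ha hb
  | @cons u v z huv w ih =>
    by_cases hv : v.1 ∈ S
    · obtain ⟨x, y, hx, hy, hxy, hl⟩ := ih hv hb
      refine ⟨x, y, hx, hy, hxy, ?_⟩
      have h1 := (chG_conn u).dist_triangle (u := u) (v := v) (w := x)
      have h2 : (Δ.chG).dist u v = 1 := SimpleGraph.dist_eq_one_iff_adj.2 huv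
      rw [SimpleGraph.Walk.length_cons]
      omega
    · refine ⟨u, v, ha, hv, huv, ?_⟩
      have := SimpleGraph.dist_le w
      rw [SimpleGraph.Walk.length_cons, SimpleGraph.dist_self]
      omega

/-- the chambers containing the panel `p` nearest to `x` lie in every apartment containing
`x` and `p` -/
theorem conv {A : Set (Finset V)} (hA : A ∈ Δ.apartments) {p : Finset V} {x d : Δ.Ch}
    (hx : x.1 ∈ A) (hp : p ∈ A) (hpc : p.card = Δ.rank - 1) (hpd : p ⊆ d.1)
    (hmin : ∀ e : Δ.Ch, p ⊆ e.1 → (Δ.chG).dist x d ≤ (Δ.chG).dist x e) : d.1 ∈ A := by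
  by_contra hd
  obtain ⟨w, hw⟩ := (chG_conn x).exists_walk_length_eq_dist x d
  obtain ⟨u, v, hu, hv, ⟨huv, q, hqc, hqu, hqv⟩, hl⟩ := exit_pair A w hx hd
  have hqA := Δ.apartments_downClosed A hA hu hqu
  have hg : ∃ g ∈ A, g.card = Δ.rank ∧ q ⊆ g ∧ g ≠ u.1 := by
    obtain ⟨c, e, h1, h2, h3, h4, h5, h6, h7, -⟩ := Δ.apartments_thin A hA q hqA hqc
    by_cases hc : c = u.1
    · exact ⟨e, h2, h4, h7, fun h => h5 (hc.trans h.symm)⟩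
    · exact ⟨c, h1, h3, h6, hc⟩
  obtain ⟨g, hgA, hgc, hqg, hgu⟩ := hg
  obtain ⟨v', hv'⟩ := retr_exists hA hgA v.2.1
  obtain ⟨d', hd'⟩ := retr_exists hA hgA d.2.1
  have hv'm := retr_mem hv'
  have hd'm := retr_mem hd'
  have hqv' : q ⊆ v' := by
    obtain ⟨q', h1, h2⟩ := retr_sub hv' hqv
    rwa [retr_unique hA hgc (Or.inr hqc) h2 (retr_self hA hgA hqA)] at h1
  have hpd' : p ⊆ d' := by
    obtain ⟨q', h1, h2⟩ := retr_sub hd' hpd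
    rwa [retr_unique hA hgc (Or.inr hpc) h2 (retr_self hA hgA hp)] at h1
  have hv'g : v' ≠ g := by
    rintro rfl
    exact hv (retr_eq_center hv' ▸ hgA)
  have hv'u : v' = u.1 := thin_eq hA hqA hqc hgA hgc hqg hu u.2.2 hqu hv'm.1
    (hv'm.2.trans v.2.2) hqv' hgu hv'g
  let D : Δ.Ch := ⟨d', Δ.apartments_sub A hA hd'm.1, hd'm.2.trans d.2.2⟩
  obtain ⟨w', hw'⟩ := (chG_conn x).exists_walk_length_eq_dist v d
  have h1 := noexp hA (AIso.id A) hgA hgc w' u D v' d' hv' hd' hv'u.symm rfl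
  have h2 := (chG_conn x).dist_triangle (u := x) (v := u) (w := D)
  have h3 := hmin D hpd'
  omega

theorem iso_dist_le {A : Set (Finset V)} (hA : A ∈ Δ.apartments) {ρ : Finset V → Finset V}
    (hρ : AIso A A ρ) {a b a' b' : Δ.Ch} (ha : a.1 ∈ A) (hb : b.1 ∈ A)
    (ha' : a'.1 = ρ a.1) (hb' : b'.1 = ρ b.1) : (Δ.chG).dist a' b' ≤ (Δ.chG).dist a b := by
  obtain ⟨w, hw⟩ := (chG_conn a).exists_walk_length_eq_dist a b
  rw [← hw]
  exact noexp hA hρ ha a.2.2 w a' b' _ _ (retr_self hA ha ha) (retr_self hA ha hb) ha' hb'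

theorem nearest_exists (x c : Δ.Ch) {p : Finset V} (hpc : p ⊆ c.1) :
    ∃ d : Δ.Ch, p ⊆ d.1 ∧ ∀ e : Δ.Ch, p ⊆ e.1 → (Δ.chG).dist x d ≤ (Δ.chG).dist x e := by
  obtain ⟨d, hd, h⟩ := WellFounded.has_min (InvImage.wf (fun d => (Δ.chG).dist x d) Nat.lt_wfRel.wf)
    {d : Δ.Ch | p ⊆ d.1} ⟨c, hpc⟩
  exact ⟨d, hd, fun e he => not_lt.1 (h e he)⟩

/-- core: `c` nearest to `x` -/
theorem core {A : Set (Finset V)} (hA : A ∈ Δ.apartments) {ρ : Finset V → Finset V}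
    (hρ : AIso A A ρ) {p q : Finset V} (hp : p ∈ A) (hpc : p.card = Δ.rank - 1)
    (hqc : q.card = Δ.rank - 1) {c d x y e : Δ.Ch}
    (hc : c.1 ∈ A) (hd : d.1 ∈ A) (hx : x.1 ∈ A) (hy : y.1 ∈ A)
    (hpC : p ⊆ c.1) (hpD : p ⊆ d.1) (hpE : p ⊆ e.1) (hcd : c ≠ d) (hec : e ≠ c) (hed : e ≠ d)
    (hqx : q ⊆ x.1) (hqy : q ⊆ y.1)
    (ρc : d.1 = ρ c.1) (ρd : c.1 = ρ d.1) (ρx : y.1 = ρ x.1) (ρy : x.1 = ρ y.1)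
    (hmin : ∀ e : Δ.Ch, p ⊆ e.1 → (Δ.chG).dist x c ≤ (Δ.chG).dist x e) :
    ∃ z : Δ.Ch, q ⊆ z.1 ∧ z ≠ x ∧ z ≠ y := by
  obtain ⟨B, hB, hxB, heB⟩ := Δ.pair_in_apartment x.1 x.2.1 e.1 e.2.1
  have hpB := Δ.apartments_downClosed B hB heB hpE
  have hqB := Δ.apartments_downClosed B hB hxB hqx
  have hcB := conv hB hxB hpB hpc hpC hmin
  have hdB : d.1 ∉ B := fun hdB => hed (Subtype.ext (thin_eq hB hpB hpc hcB c.2.2 hpC hdB d.2.2 hpD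
    heB e.2.2 hpE (fun h => hcd (Subtype.ext h)) (fun h => hec (Subtype.ext h))))
  have hlt : (Δ.chG).dist x c < (Δ.chG).dist x d := by
    refine lt_of_le_of_ne (hmin d hpD) fun heq => hdB ?_
    exact conv hB hxB hpB hpc hpD (fun e he => heq ▸ hmin e he)
  have hyc : (Δ.chG).dist x d ≤ (Δ.chG).dist y c := iso_dist_le hA hρ hy hc ρy ρc
  have hyd : (Δ.chG).dist y d ≤ (Δ.chG).dist x c := iso_dist_le hA hρ hx hc ρx ρc
  have hymin : ∀ e : Δ.Ch, p ⊆ e.1 → (Δ.chG).dist y d ≤ (Δ.chG).dist y e := by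
    obtain ⟨m, hm, hmm⟩ := nearest_exists y c hpC
    have hmA := conv hA hy hp hpc hm hmm
    have hmd : m = d := by
      refine Subtype.ext (thin_eq hA hp hpc hc c.2.2 hpC hd d.2.2 hpD hmA m.2.2 hm
        (fun h => hcd (Subtype.ext h)) (fun h => ?_))
      have h1 : m = c := Subtype.ext h
      have := hmm d hpD
      rw [h1] at this
      omega
    rw [← hmd]; exact hmm
  have hyB : y.1 ∉ B := fun hyB => hdB (conv hB hyB hpB hpc hpD hymin)
  have hz : ∃ z ∈ B, z.card = Δ.rank ∧ q ⊆ z ∧ z ≠ x.1 := by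
    obtain ⟨c, e, h1, h2, h3, h4, h5, h6, h7, -⟩ := Δ.apartments_thin B hB q hqB hqc
    by_cases hc : c = x.1
    · exact ⟨e, h2, h4, h7, fun h => h5 (hc.trans h.symm)⟩
    · exact ⟨c, h1, h3, h6, hc⟩
  obtain ⟨z, hzB, hzc, hqz, hzx⟩ := hz
  refine ⟨⟨z, Δ.apartments_sub B hB hzB, hzc⟩, hqz, fun h => hzx (congrArg Subtype.val h), ?_⟩
  rintro rfl
  exact hyB hzB

/-- the two chambers of a `ρ`-fixed panel are swapped -/
theorem swapped {A : Set (Finset V)} (hA : A ∈ Δ.apartments) {ρ : Finset V → Finset V}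
    (hρ : AIso A A ρ) (hinvol : ∀ u ∈ A, ρ (ρ u) = u)
    (hno : ∀ c ∈ A, c.card = Δ.rank → ρ c ≠ c) {p : Finset V} (hp : p ∈ A)
    (hpc : p.card = Δ.rank - 1) (hpf : ρ p = p) :
    ∃ c d : Δ.Ch, c.1 ∈ A ∧ d.1 ∈ A ∧ p ⊆ c.1 ∧ p ⊆ d.1 ∧ c ≠ d ∧ d.1 = ρ c.1 ∧ c.1 = ρ d.1 := by
  obtain ⟨c, -, hc, -, hcc, -, -, hpC, -⟩ := Δ.apartments_thin A hA p hp hpc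
  have hd := hρ.1.mapsTo hc
  refine ⟨⟨c, Δ.apartments_sub A hA hc, hcc⟩,
    ⟨ρ c, Δ.apartments_sub A hA hd, (hρ.2.2 c hc).trans hcc⟩, hc, hd, hpC, ?_, ?_, rfl,
    (hinvol c hc).symm⟩
  · have := (hρ.2.1 p hp c hc).1 hpC
    rwa [hpf] at this
  · exact fun h => hno c hc hcc (congrArg Subtype.val h).symm

theorem thick_transfer {A : Set (Finset V)} (hA : A ∈ Δ.apartments) {ρ : Finset V → Finset V}
    (hρ : AIso A A ρ) (hinvol : ∀ u ∈ A, ρ (ρ u) = u)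
    (hno : ∀ c ∈ A, c.card = Δ.rank → ρ c ≠ c) {p q : Finset V} (hp : p ∈ A)
    (hpf : ρ p = p) (hq : q ∈ A) (hqP : Δ.IsPanel q) (hqf : ρ q = q)
    (hthick : Δ.IsThickPanel p) : Δ.IsThickPanel q := by
  obtain ⟨hpP, c₁, c₂, c₃, h1, h2, h3, hp1, hp2, hp3, h12, h13, h23⟩ := hthick
  obtain ⟨c, d, hc, hd, hpC, hpD, hcd, ρc, ρd⟩ := swapped hA hρ hinvol hno hp hpP.2 hpf
  obtain ⟨x, y, hx, hy, hqx, hqy, hxy, ρx, ρy⟩ := swapped hA hρ hinvol hno hq hqP.2 hqf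
  have he : ∃ e : Δ.Ch, p ⊆ e.1 ∧ e ≠ c ∧ e ≠ d := by
    by_contra! H
    have e1 := H ⟨c₁, h1⟩ hp1
    have e2 := H ⟨c₂, h2⟩ hp2
    have e3 := H ⟨c₃, h3⟩ hp3
    by_cases k1 : (⟨c₁, h1⟩ : Δ.Ch) = c
    · have k2 : (⟨c₂, h2⟩ : Δ.Ch) ≠ c := fun h => h12 (congrArg Subtype.val (k1.trans h.symm))
      have k3 : (⟨c₃, h3⟩ : Δ.Ch) ≠ c := fun h => h13 (congrArg Subtype.val (k1.trans h.symm))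
      exact h23 (congrArg Subtype.val ((e2 k2).trans (e3 k3).symm))
    · by_cases k2 : (⟨c₂, h2⟩ : Δ.Ch) = c
      · have k3 : (⟨c₃, h3⟩ : Δ.Ch) ≠ c := fun h => h23 (congrArg Subtype.val (k2.trans h.symm))
        exact h13 (congrArg Subtype.val ((e1 k1).trans (e3 k3).symm))
      · exact h12 (congrArg Subtype.val ((e1 k1).trans (e2 k2).symm))
  obtain ⟨e, hpE, hec, hed⟩ := he
  have hz : ∃ z : Δ.Ch, q ⊆ z.1 ∧ z ≠ x ∧ z ≠ y := by
    obtain ⟨m, hm, hmm⟩ := nearest_exists x c hpC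
    have hmA := conv hA hx hp hpP.2 hm hmm
    by_cases hmc : m = c
    · subst hmc
      exact core hA hρ hp hpP.2 hqP.2 hc hd hx hy hpC hpD hpE hcd hec hed hqx hqy ρc ρd ρx ρy hmm
    · have hmd : m = d := Subtype.ext (thin_eq hA hp hpP.2 hc c.2.2 hpC hd d.2.2 hpD hmA m.2.2 hm
        (fun h => hcd (Subtype.ext h)) (fun h => hmc (Subtype.ext h)))
      subst hmd
      exact core hA hρ hp hpP.2 hqP.2 hd hc hx hy hpD hpC hpE hcd.symm hed hec hqx hqy
        ρd ρc ρx ρy hmm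
  obtain ⟨z, hqz, hzx, hzy⟩ := hz
  exact ⟨hqP, x.1, y.1, z.1, x.2, y.2, z.2, hqx, hqy, hqz, fun h => hxy (Subtype.ext h),
    fun h => hzx (Subtype.ext h).symm, fun h => hzy (Subtype.ext h).symm⟩

end SphericalBuilding

/-- Let `M` be a wall of an apartment `A` of a spherical building, i.e. the
fixed-point complex of a (nontrivial, involutive, chamber-free) reflection `ρ` of the
Coxeter complex `A`.  Then the panels contained in `M` are either all thick or all thin. -/
theorem wall_panels_all_thick_or_all_thin {V : Type*} [DecidableEq V]
    (Δ : SphericalBuilding V) (A : Set (Finset V)) (hA : A ∈ Δ.apartments)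
    -- `ρ` is a reflection of the apartment `A`:
    (ρ : Finset V → Finset V) (hbij : Set.BijOn ρ A A)
    (hord : ∀ u ∈ A, ∀ w ∈ A, (u ⊆ w ↔ ρ u ⊆ ρ w))
    (hcard : ∀ u ∈ A, (ρ u).card = u.card)
    (hinvol : ∀ u ∈ A, ρ (ρ u) = u)
    (hnontrivial : ∃ u ∈ A, ρ u ≠ u)
    (hnofixedchamber : ∀ c ∈ A, c.card = Δ.rank → ρ c ≠ c)
    -- `M` is the wall of `ρ`, the set of faces of `A` fixed by `ρ`:
    (M : Set (Finset V)) (hM : M = {s ∈ A | ρ s = s}) :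
    (∀ p ∈ M, Δ.IsPanel p → Δ.IsThickPanel p) ∨
    (∀ p ∈ M, Δ.IsPanel p → Δ.IsThinPanel p) := by
  classical
  have hρ : SphericalBuilding.AIso A A ρ := ⟨hbij, hord, hcard⟩
  subst hM
  by_cases h : ∃ p ∈ {s ∈ A | ρ s = s}, Δ.IsThickPanel p
  · left
    obtain ⟨p, ⟨hp, hpf⟩, hthick⟩ := h
    rintro q ⟨hq, hqf⟩ hqP
    exact SphericalBuilding.thick_transfer hA hρ hinvol hnofixedchamber hp hpf hq hqP hqf hthick
  · right
    intro p hp hpP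
    obtain ⟨c, d, hc, hd, hcc, hdc, hcd, hpc, hpd, -⟩ := Δ.apartments_thin A hA p hp.1 hpP.2
    have hC : Δ.IsChamber c := ⟨Δ.apartments_sub A hA hc, hcc⟩
    have hD : Δ.IsChamber d := ⟨Δ.apartments_sub A hA hd, hdc⟩
    refine ⟨hpP, c, d, hC, hD, hpc, hpd, hcd, fun e he hpe => ?_⟩
    by_contra! hne
    exact h ⟨p, hp, hpP, c, d, e, hC, hD, he, hpc, hpd, hpe, hcd, hne.1.symm, hne.2.symm⟩
end
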